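/- Let k be a field of characteristic zero and S = k[x_0, …, x_n]. If I and J are strongly stable monomial ideals of S and J = g·I for some g ∈ GL_{n+1}(k) (acting by the k-algebra automorphism x_j ↦ ∑_i g_{ij} x_i and taking the image ideal), then I = J. In other words, every GL_{n+1}(k)-orbit of ideals contains at most one strongly stable ideal. -/

import Mathlib

open MvPolynomial

noncomputable section

/-!
Write `V_{≤ j}` and `V_{≥ j}` for the spans of the variables `x_i` with `i ≤ j`, resp. `i ≥ j`.
Comparing dimensions, each `V_{≤ j}` contains a form `y_j ≠ 0` with `z_j := g y_j ∈ V_{≥ j}`.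
If `x^s ∈ I`, strong stability of `I` puts `y^s := ∏ y_j^{s_j}` into `I`, so `z^s = g y^s` is a
nonzero element of `J`. If `x^s` were not in `J`, no monomial of `z^s` would be either: each arises
from `x^s` by replacing variables with later ones, and `J` is strongly stable. As `J` is a monomial
ideal this is absurd. Hence `g I ⊆ J` forces `I ⊆ J`, and `g⁻¹ J ⊆ I` likewise forces `J ⊆ I`.
-/

open Finsupp (single)

variable {σ R : Type*}

theorem finsuppNat_induction {motive : (σ →₀ ℕ) → Prop} (s : σ →₀ ℕ) (zero : motive 0)
    (add_single : ∀ s j, motive s → motive (s + single j 1)) : motive s := by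
  classical
  obtain ⟨m, rfl⟩ := Multiset.toFinsupp.surjective s
  induction m using Multiset.induction with
  | empty => simpa using zero
  | cons j m ih => simpa [← Multiset.singleton_add, add_comm] using add_single _ j ih

/-- A set of exponents is exchange closed for `r` if its monomials stay in it when a factor `X j` is
replaced by `X i` with `r i j`. Strong stability is the case of the relation `<`, and passing to the
complement reverses `r`. -/
def IsExchangeClosed (r : σ → σ → Prop) (A : Set (σ →₀ ℕ)) : Prop :=
  ∀ (u : σ →₀ ℕ) (i j : σ), r i j → u + single j 1 ∈ A → u + single i 1 ∈ A

namespace IsExchangeClosed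

variable {r : σ → σ → Prop} {A : Set (σ →₀ ℕ)}

theorem compl (hA : IsExchangeClosed r A) : IsExchangeClosed (Function.swap r) Aᶜ :=
  fun u i j hij hu hA' => hu (hA u j i hij hA')

theorem le_of_lt [PartialOrder σ] (hA : IsExchangeClosed (· < ·) A) :
    IsExchangeClosed (· ≤ ·) A := by
  intro u i j hij hu
  obtain rfl | hlt := hij.eq_or_lt
  exacts [hu, hA u i j hlt hu]

theorem preimage_add_right (hA : IsExchangeClosed r A) (t : σ →₀ ℕ) :
    IsExchangeClosed r {u | u + t ∈ A} := by
  intro u i j hij hu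
  rw [Set.mem_ofPred_eq, add_right_comm] at hu ⊢
  exact hA _ i j hij hu

open scoped Pointwise in
theorem finsuppProd_pow_mem_restrictSupport [CommSemiring R] (hA : IsExchangeClosed r A)
    {y : σ → MvPolynomial σ R}
    (hy : ∀ j, y j ∈ restrictSupport R ((single · 1) '' {i | r i j})) {s : σ →₀ ℕ} (hs : s ∈ A) :
    s.prod (fun j e => y j ^ e) ∈ restrictSupport R A := by
  induction s using finsuppNat_induction generalizing A with
  | zero => simpa using (monomial_mem_restrictSupport R (r := (1 : R))).mpr (Or.inl hs)
  | add_single s j ih =>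
    have hprod := ih (hA.preimage_add_right (single j 1)) hs
    have hsub : {u | u + single j 1 ∈ A} + (single · 1) '' {i | r i j} ⊆ A := by
      rintro _ ⟨u, hu, _, ⟨i, hij, rfl⟩, rfl⟩
      exact hA u i j hij hu
    rw [Finsupp.prod_add_index' (fun _ => pow_zero _) (fun _ _ _ => pow_add _ _ _),
      Finsupp.prod_single_index (h := fun j e => y j ^ e) (pow_zero _), pow_one]
    apply restrictSupport_mono R hsub
    rw [restrictSupport_add]
    exact Submodule.mul_mem_mul hprod (hy j)

end IsExchangeClosed

section MonomialIdeal

variable [CommSemiring R] {I J : Ideal (MvPolynomial σ R)}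

/-- The exponents `s` of the monomials `x^s` in an ideal. -/
def monomialExponents (I : Ideal (MvPolynomial σ R)) : Set (σ →₀ ℕ) :=
  {s | monomial s (1 : R) ∈ I}

theorem mem_of_mem_restrictSupport_monomialExponents {p : MvPolynomial σ R}
    (hp : p ∈ restrictSupport R (monomialExponents I)) : p ∈ I := by
  rw [restrictSupport_eq_span] at hp
  have hle : Submodule.span R ((monomial · 1) '' monomialExponents I) ≤ I.restrictScalars R :=
    Submodule.span_le.mpr (Set.image_subset_iff.mpr subset_rfl)
  exact hle hp

/-- A monomial ideal: an ideal generated by monomials with coefficient `1`. -/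
def IsMonomialIdeal (I : Ideal (MvPolynomial σ R)) : Prop :=
  ∃ G : Set (σ →₀ ℕ), I = Ideal.span ((fun s => monomial s (1 : R)) '' G)

theorem IsMonomialIdeal.mem_restrictSupport (hI : IsMonomialIdeal I) {p : MvPolynomial σ R}
    (hp : p ∈ I) : p ∈ restrictSupport R (monomialExponents I) := by
  obtain ⟨G, rfl⟩ := hI
  intro t ht
  obtain ⟨s, hs, hst⟩ := mem_ideal_span_monomial_image.mp hp t ht
  have hdvd : monomial s (1 : R) ∣ monomial t 1 :=
    monomial_dvd_monomial.mpr ⟨Or.inr hst, dvd_rfl⟩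
  refine Ideal.mem_of_dvd _ hdvd (Ideal.subset_span ?_)
  exact Set.mem_image_of_mem _ hs

theorem IsMonomialIdeal.le_of_monomialExponents_subset (hI : IsMonomialIdeal I)
    (h : monomialExponents I ⊆ monomialExponents J) : I ≤ J :=
  fun _ hp => mem_of_mem_restrictSupport_monomialExponents
    (restrictSupport_mono R h (hI.mem_restrictSupport hp))

/-- A strongly stable ideal is a monomial ideal whose monomials stay in it when a variable is
replaced by an earlier one. -/
structure IsStronglyStable [LT σ] (I : Ideal (MvPolynomial σ R)) : Prop where
  isMonomialIdeal : IsMonomialIdeal I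
  isExchangeClosed : IsExchangeClosed (· < ·) (monomialExponents I)

end MonomialIdeal

section LinearForm

variable [CommSemiring R] [Fintype σ]

variable (σ R) in
/-- The linear form `∑ i, a i • X i` with coefficient vector `a`. -/
def linearForm : (σ → R) →ₗ[R] MvPolynomial σ R :=
  Fintype.linearCombination R X

theorem linearForm_injective : Function.Injective (linearForm σ R) :=
  (linearIndependent_X σ R).fintypeLinearCombination_injective

theorem linearForm_mem_restrictSupport {a : σ → R} {T : Set σ} (ha : ∀ i ∉ T, a i = 0) :
    linearForm σ R a ∈ restrictSupport R ((single · 1) '' T) := by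
  refine Submodule.sum_mem _ fun i _ => ?_
  by_cases hi : i ∈ T
  · exact Submodule.smul_mem _ _ ((monomial_mem_restrictSupport R).mpr (Or.inl ⟨i, hi, rfl⟩))
  · simp [ha i hi]

/-- The linear substitution attached to a matrix `M`: it sends `X j` to the linear form given by
the `j`-th column of `M`, so that it acts on coefficient vectors by `a ↦ M *ᵥ a`. -/
def linearSubst (M : Matrix σ σ R) : MvPolynomial σ R →ₐ[R] MvPolynomial σ R :=
  aeval fun j => ∑ i, M i j • X i

theorem linearSubst_linearForm (M : Matrix σ σ R) (a : σ → R) :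
    linearSubst M (linearForm σ R a) = linearForm σ R (M.mulVec a) := by
  simp only [linearSubst, linearForm, Fintype.linearCombination_apply, map_sum, map_smul, aeval_X,
    Matrix.mulVec, dotProduct, Finset.smul_sum, Finset.sum_smul, smul_smul, mul_comm]
  exact Finset.sum_comm

theorem linearSubst_one [DecidableEq σ] : linearSubst (1 : Matrix σ σ R) = AlgHom.id R _ := by
  ext1 j
  simp [linearSubst, Matrix.one_apply]

theorem linearSubst_mul (M N : Matrix σ σ R) :
    linearSubst (M * N) = (linearSubst M).comp (linearSubst N) := by
  ext1 j
  have hX : ∀ N : Matrix σ σ R, linearSubst N (X j) = linearForm σ R (N.col j) :=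
    fun N => aeval_X _ _
  rw [AlgHom.comp_apply, hX, hX, linearSubst_linearForm]
  rfl

end LinearForm

theorem map_linearSubst_inv_map_linearSubst [CommRing R] [Fintype σ] [DecidableEq σ]
    (g : Matrix.GeneralLinearGroup σ R) (I : Ideal (MvPolynomial σ R)) :
    (I.map (linearSubst g.val)).map (linearSubst g⁻¹.val) = I := by
  rw [Ideal.map_mapₐ, ← linearSubst_mul, ← Units.val_mul, inv_mul_cancel, Units.val_one,
    linearSubst_one]
  exact Ideal.map_id I

theorem exists_ne_zero_forall_lt_mulVec_eq_zero [CommRing R] [Nontrivial R] [Fintype σ]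
    [LinearOrder σ] (M : Matrix σ σ R) (j : σ) :
    ∃ a : σ → R, a ≠ 0 ∧ (∀ i, j < i → a i = 0) ∧ ∀ i < j, M.mulVec a i = 0 := by
  -- The required vanishing conditions are one per index `i ≠ j`, one fewer than the unknowns.
  let f : (σ → R) →ₗ[R] ({i // i ≠ j} → R) := LinearMap.pi fun i =>
    if i < j then LinearMap.proj i.val ∘ₗ M.mulVecLin else LinearMap.proj i.val
  have hf : ¬ Function.Injective f := fun hinj =>
    (card_le_of_injective R f hinj).not_gt (Fintype.card_subtype_lt (x := j) (by simp))
  obtain ⟨a, hfa, ha⟩ : ∃ a, f a = 0 ∧ a ≠ 0 := by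
    simpa [injective_iff_map_eq_zero] using hf
  refine ⟨a, ha, fun i hi => ?_, fun i hi => ?_⟩
  · simpa [f, hi.not_gt] using congrFun hfa ⟨i, hi.ne'⟩
  · simpa [f, hi] using congrFun hfa ⟨i, hi.ne⟩

theorem IsStronglyStable.le_of_map_linearSubst_le [CommRing R] [IsDomain R] [Fintype σ]
    [LinearOrder σ] {I J : Ideal (MvPolynomial σ R)} (hI : IsStronglyStable I)
    (hJ : IsStronglyStable J) {M : Matrix σ σ R} (hM : Function.Injective M.mulVec)
    (hIJ : I.map (linearSubst M) ≤ J) : I ≤ J := by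
  refine hI.isMonomialIdeal.le_of_monomialExponents_subset fun s hsI => ?_
  choose a ha_ne ha_le ha_ge using exists_ne_zero_forall_lt_mulVec_eq_zero M
  let z : σ → MvPolynomial σ R := fun j => linearForm σ R (M.mulVec (a j))
  have hy_mem : s.prod (fun j e => linearForm σ R (a j) ^ e) ∈ I :=
    mem_of_mem_restrictSupport_monomialExponents <|
      hI.isExchangeClosed.le_of_lt.finsuppProd_pow_mem_restrictSupport
        (fun j => linearForm_mem_restrictSupport fun i hi => ha_le j i (not_le.mp hi)) hsI
  have hz_mem : s.prod (fun j e => z j ^ e) ∈ J := by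
    simpa only [map_finsuppProd, map_pow, linearSubst_linearForm] using
      hIJ (Ideal.mem_map_of_mem (linearSubst M) hy_mem)
  have hz_ne : s.prod (fun j e => z j ^ e) ≠ 0 := by
    refine Finset.prod_ne_zero_iff.mpr fun j _ => pow_ne_zero _ fun hz => ha_ne j (hM ?_)
    rw [Matrix.mulVec_zero]
    exact linearForm_injective (hz.trans (map_zero _).symm)
  by_contra hsJ
  have hz_compl : s.prod (fun j e => z j ^ e) ∈ restrictSupport R (monomialExponents J)ᶜ :=
    hJ.isExchangeClosed.le_of_lt.compl.finsuppProd_pow_mem_restrictSupport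
      (fun j => linearForm_mem_restrictSupport fun i hi => ha_ge j i (not_le.mp hi)) hsJ
  obtain ⟨t, ht⟩ := support_nonempty.mpr hz_ne
  exact hz_compl ht (hJ.isMonomialIdeal.mem_restrictSupport hz_mem ht)

theorem stmt18_general [CommRing R] [IsDomain R] [Fintype σ] [LinearOrder σ]
    {I J : Ideal (MvPolynomial σ R)} (hI : IsStronglyStable I) (hJ : IsStronglyStable J)
    (g : Matrix.GeneralLinearGroup σ R) (hIJ : J = I.map (linearSubst g.val)) : I = J := by
  apply le_antisymm
  · exact hI.le_of_map_linearSubst_le hJ (Matrix.mulVec_injective_of_isUnit g.isUnit) hIJ.ge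
  · refine hJ.le_of_map_linearSubst_le hI (Matrix.mulVec_injective_of_isUnit g⁻¹.isUnit) ?_
    rw [hIJ, map_linearSubst_inv_map_linearSubst]

/-- over a field `k` of characteristic zero, if `I` and `J` are
strongly stable monomial ideals of `S = k[x_0, …, x_n]` and `J = g·I` for some
`g ∈ GL_{n+1}(k)` (acting by the algebra automorphism `x_j ↦ ∑_i g_{ij} x_i`),
then `I = J`: each `GL_{n+1}(k)`-orbit contains at most one strongly stable ideal. -/
theorem stmt18 {k : Type} [Field k] [CharZero k] (n : ℕ)
    (I J : Ideal (MvPolynomial (Fin (n + 1)) k))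
    -- `I` and `J` are monomial ideals:
    (hImon : ∃ G : Set (Fin (n + 1) →₀ ℕ),
      I = Ideal.span ((fun s => (monomial s (1 : k) : MvPolynomial (Fin (n + 1)) k)) '' G))
    (hJmon : ∃ G : Set (Fin (n + 1) →₀ ℕ),
      J = Ideal.span ((fun s => (monomial s (1 : k) : MvPolynomial (Fin (n + 1)) k)) '' G))
    -- `I` and `J` are strongly stable:
    (hIst : ∀ (u : Fin (n + 1) →₀ ℕ) (i j : Fin (n + 1)), i < j →
      (monomial (u + Finsupp.single j 1) (1 : k) : MvPolynomial (Fin (n + 1)) k) ∈ I →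
      (monomial (u + Finsupp.single i 1) (1 : k) : MvPolynomial (Fin (n + 1)) k) ∈ I)
    (hJst : ∀ (u : Fin (n + 1) →₀ ℕ) (i j : Fin (n + 1)), i < j →
      (monomial (u + Finsupp.single j 1) (1 : k) : MvPolynomial (Fin (n + 1)) k) ∈ J →
      (monomial (u + Finsupp.single i 1) (1 : k) : MvPolynomial (Fin (n + 1)) k) ∈ J)
    (g : Matrix.GeneralLinearGroup (Fin (n + 1)) k)
    -- `J` is the image of `I` under the coordinate change `x_j ↦ ∑ i, g i j • x i`:
    (hJ : J = Ideal.map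
      (MvPolynomial.aeval (fun j : Fin (n + 1) =>
          ∑ i : Fin (n + 1),
            ((g : Matrix (Fin (n + 1)) (Fin (n + 1)) k) i j) •
              (X i : MvPolynomial (Fin (n + 1)) k)) :
        MvPolynomial (Fin (n + 1)) k →ₐ[k] MvPolynomial (Fin (n + 1)) k) I) :
    I = J :=
  stmt18_general ⟨hImon, hIst⟩ ⟨hJmon, hJst⟩ g hJ

end
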